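/- Let k ∈ (0,1) and q = e^{−πK'/K}. For every n ∈ ℕ, Kuznetsov's moment integrals satisfy 2 I_{n+1}^+ − I_n^− = 8 (π/K)^{2n+4} Σ_{m≥1} m^{2n+3} q^m/(1 − q^{2m}). -/

import Mathlib

/-!
For `ε = ±1` and `ω = x + iy`, the factorization
`2 e^{-x} (cosh x - ε cos y) = (1 - ε e^{-ω̄}) (1 - ε e^{-ω})` turns `1 / (cosh x - ε cos y)` into a
double geometric series, so that termwise Laplace integration gives
`∫₀^∞ s^j ds / (cosh (xs) - ε cos (ys)) = 2 j! ∑ ε^{m+n} ((m + ½) ω̄ + (n + ½) ω)^{-(j+1)}`.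

After `x = s²`, the integrals with `cosh (K' s)` in `2 I_{n+1}^+ - I_n^-` contribute the terms with
`m + n` even for `ω = K' + iK`, and those with `cosh (K s)` the terms with `m + n` odd for
`ω = K - iK'`. A quarter turn multiplies `ω^{-(2n+4)}` by `(-1)^n`, so together they are
`4 (2n+3)! ∑ ((2P + 1) K' + 2riK)^{-(2n+4)}` over all `P ≥ 0` and `r ∈ ℤ`. The Lipschitz formula in
`r` and a geometric series in `P` evaluate this sum.
-/

open MeasureTheory Real

/-- The complete elliptic integral of the first kind `K(k)`. -/
noncomputable def ellipticK (k : ℝ) : ℝ :=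
  ∫ θ in (0 : ℝ)..(π / 2), (1 - k ^ 2 * Real.sin θ ^ 2) ^ (-(1 / 2) : ℝ)

/-- Kuznetsov's moment integral `I_n^+`, realizing
`(1/2)∫_ℝ x^n dx/(cos(√x K) + cosh(√x K'))` with `√x = i√(−x)` for `x < 0`. -/
noncomputable def Iplus (k : ℝ) (n : ℕ) : ℝ :=
  (1 / 2) * (∫ x in Set.Ioi (0 : ℝ), x ^ n /
      (Real.cos (ellipticK k * Real.sqrt x) +
        Real.cosh (ellipticK (Real.sqrt (1 - k ^ 2)) * Real.sqrt x)))
  + ((-1 : ℝ) ^ n / 2) * (∫ x in Set.Ioi (0 : ℝ), x ^ n /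
      (Real.cosh (ellipticK k * Real.sqrt x) +
        Real.cos (ellipticK (Real.sqrt (1 - k ^ 2)) * Real.sqrt x)))

/-- Kuznetsov's moment integral `I_n^−`, realizing
`∫_ℝ x^{n+1} dx/(cos(√x K) − cosh(√x K'))` with `√x = i√(−x)` for `x < 0`. -/
noncomputable def Iminus (k : ℝ) (n : ℕ) : ℝ :=
  (∫ x in Set.Ioi (0 : ℝ), x ^ (n + 1) /
      (Real.cos (ellipticK k * Real.sqrt x) -
        Real.cosh (ellipticK (Real.sqrt (1 - k ^ 2)) * Real.sqrt x)))
  + (-1 : ℝ) ^ (n + 1) * (∫ x in Set.Ioi (0 : ℝ), x ^ (n + 1) /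
      (Real.cosh (ellipticK k * Real.sqrt x) -
        Real.cos (ellipticK (Real.sqrt (1 - k ^ 2)) * Real.sqrt x)))

/-! ### Termwise Laplace integration -/

lemma integrableOn_pow_mul_exp_neg (j : ℕ) {c : ℝ} (hc : 0 < c) :
    IntegrableOn (fun s : ℝ => s ^ j * Real.exp (-c * s)) (Set.Ioi 0) := by
  have hj : (-1 : ℝ) < j := by linarith [j.cast_nonneg (α := ℝ)]
  simpa using integrableOn_rpow_mul_exp_neg_mul_rpow hj one_pos hc

lemma integral_pow_mul_exp_neg (j : ℕ) {c : ℝ} (hc : 0 < c) :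
    ∫ s in Set.Ioi (0 : ℝ), s ^ j * Real.exp (-c * s) = j.factorial / c ^ (j + 1) := by
  have h := Real.integral_rpow_mul_exp_neg_mul_Ioi (a := j + 1) (by positivity) hc
  have hpow : (1 / c) ^ ((j : ℝ) + 1) = 1 / c ^ (j + 1) := by
    rw [← Nat.cast_succ, Real.rpow_natCast, one_div_pow]
  simp only [add_sub_cancel_right, Real.rpow_natCast, hpow, Real.Gamma_nat_eq_factorial] at h
  simp only [neg_mul, h, one_div_mul_eq_div]

lemma norm_pow_mul_cexp (j : ℕ) (c : ℂ) {s : ℝ} (hs : 0 < s) :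
    ‖(s : ℂ) ^ j * Complex.exp (-c * s)‖ = s ^ j * Real.exp (-c.re * s) := by
  rw [norm_mul, norm_pow, Complex.norm_real, Complex.norm_exp, Real.norm_of_nonneg hs.le]
  simp

lemma integrableOn_pow_mul_cexp_neg (j : ℕ) {c : ℂ} (hc : 0 < c.re) :
    IntegrableOn (fun s : ℝ => (s : ℂ) ^ j * Complex.exp (-c * s)) (Set.Ioi 0) := by
  refine (integrableOn_pow_mul_exp_neg j hc).mono'
    (Continuous.aestronglyMeasurable (by fun_prop)) ?_
  filter_upwards [ae_restrict_mem measurableSet_Ioi] with s hs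
  exact (norm_pow_mul_cexp j c hs).le

lemma tendsto_pow_mul_cexp_neg (j : ℕ) {c : ℂ} (hc : 0 < c.re) :
    Filter.Tendsto (fun s : ℝ => (s : ℂ) ^ j * Complex.exp (-c * s)) Filter.atTop (nhds 0) := by
  rw [tendsto_zero_iff_norm_tendsto_zero]
  refine (tendsto_rpow_mul_exp_neg_mul_atTop_nhds_zero j c.re hc).congr' ?_
  filter_upwards [Filter.eventually_gt_atTop 0] with s hs
  rw [norm_pow_mul_cexp j c hs, Real.rpow_natCast]

lemma hasDerivAt_pow_succ_mul_cexp_neg (j : ℕ) (c : ℂ) (s : ℝ) :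
    HasDerivAt (fun s : ℝ => (s : ℂ) ^ (j + 1) * Complex.exp (-c * s))
      ((j + 1 : ℕ) * ((s : ℂ) ^ j * Complex.exp (-c * s))
        - c * ((s : ℂ) ^ (j + 1) * Complex.exp (-c * s))) s := by
  have h : HasDerivAt (fun z : ℂ => z ^ (j + 1) * Complex.exp (-c * z))
      (((j + 1 : ℕ) : ℂ) * (s : ℂ) ^ j * Complex.exp (-c * s)
        + (s : ℂ) ^ (j + 1) * (Complex.exp (-c * s) * (-c * 1))) s :=
    (hasDerivAt_pow (j + 1) (s : ℂ)).mul (((hasDerivAt_id (s : ℂ)).const_mul (-c)).cexp)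
  convert! h.comp_ofReal using 1
  ring

lemma integral_pow_succ_mul_cexp_neg (j : ℕ) {c : ℂ} (hc : 0 < c.re) :
    c * ∫ s in Set.Ioi (0 : ℝ), (s : ℂ) ^ (j + 1) * Complex.exp (-c * s) =
      (j + 1 : ℕ) * ∫ s in Set.Ioi (0 : ℝ), (s : ℂ) ^ j * Complex.exp (-c * s) := by
  have i₁ := (integrableOn_pow_mul_cexp_neg j hc).const_mul ((j + 1 : ℕ) : ℂ)
  have i₂ := (integrableOn_pow_mul_cexp_neg (j + 1) hc).const_mul c
  have h := integral_Ioi_of_hasDerivAt_of_tendsto'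
    (fun s _ => hasDerivAt_pow_succ_mul_cexp_neg j c s) (i₁.sub i₂)
    (tendsto_pow_mul_cexp_neg (j + 1) hc)
  rw [integral_sub i₁ i₂, integral_const_mul, integral_const_mul] at h
  simp only [Complex.ofReal_zero, zero_pow j.succ_ne_zero, zero_mul, sub_self] at h
  exact (sub_eq_zero.1 h).symm

lemma integral_pow_mul_cexp_neg (j : ℕ) {c : ℂ} (hc : 0 < c.re) :
    ∫ s in Set.Ioi (0 : ℝ), (s : ℂ) ^ j * Complex.exp (-c * s) = j.factorial / c ^ (j + 1) := by
  have hc0 : c ≠ 0 := by rintro rfl; simp at hc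
  induction j with
  | zero => simpa using integral_exp_mul_complex_Ioi (a := -c) (by simpa using hc) 0
  | succ j ih =>
    refine mul_left_cancel₀ hc0 ?_
    rw [integral_pow_succ_mul_cexp_neg j hc, ih, Nat.factorial_succ, Nat.cast_mul]
    field_simp
    ring

lemma hasSum_integral_pow_mul_of_hasSum_cexp {ι : Type*} [Countable ι] (j : ℕ) {κ c : ι → ℂ}
    (hc : ∀ i, 0 < (c i).re) (hsum : Summable fun i => ‖κ i‖ / (c i).re ^ (j + 1)) {F : ℝ → ℂ}
    (hF : ∀ s : ℝ, 0 < s → HasSum (fun i => κ i * Complex.exp (-c i * s)) (F s)) :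
    HasSum (fun i => κ i * (j.factorial / c i ^ (j + 1)))
      (∫ s in Set.Ioi (0 : ℝ), (s : ℂ) ^ j * F s) := by
  have h := hasSum_integral_of_summable_integral_norm (μ := volume.restrict (Set.Ioi (0 : ℝ)))
    (F := fun i (s : ℝ) => κ i * ((s : ℂ) ^ j * Complex.exp (-c i * s)))
    (fun i => (integrableOn_pow_mul_cexp_neg j (hc i)).const_mul _) ?_
  · simp only [integral_const_mul, integral_pow_mul_cexp_neg j (hc _)] at h
    convert! h using 1
    refine setIntegral_congr_fun measurableSet_Ioi fun s hs => ?_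
    simp only [mul_left_comm (κ _)]
    rw [tsum_mul_left, (hF s hs).tsum_eq]
  · refine (hsum.mul_left (j.factorial : ℝ)).congr fun i => ?_
    simp only [norm_mul (κ i), integral_const_mul]
    rw [setIntegral_congr_fun measurableSet_Ioi fun s hs => norm_pow_mul_cexp j (c i) hs,
      integral_pow_mul_exp_neg j (hc i)]
    ring

/-! ### Trigonometric moments as lattice sums -/

/-- The moments of `1 / (cosh (x s) - ε cos (y s))`; only `ε = ±1` is used. -/
noncomputable def trigMoment (ε x y : ℝ) (j : ℕ) : ℝ :=
  ∫ s in Set.Ioi (0 : ℝ), s ^ j / (Real.cosh (x * s) - ε * Real.cos (y * s))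

lemma trigMoment_neg (ε x y : ℝ) (j : ℕ) : trigMoment ε x (-y) j = trigMoment ε x y j := by
  simp only [trigMoment, neg_mul, Real.cos_neg]

/-- The point `(m + ½) ω̄ + (n + ½) ω`, for `ω = x + iy`, of the cone spanned by `ω̄` and `ω`. -/
noncomputable def conePoint (x y : ℝ) (p : ℕ × ℕ) : ℂ :=
  (p.1 + p.2 + 1) * x + (p.2 - p.1) * y * Complex.I

lemma conePoint_re (x y : ℝ) (p : ℕ × ℕ) : (conePoint x y p).re = (p.1 + p.2 + 1) * x := by
  simp [conePoint]

lemma conePoint_mul (x y s : ℝ) (p : ℕ × ℕ) :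
    conePoint (x * s) (y * s) p = conePoint x y p * s := by
  simp only [conePoint, Complex.ofReal_mul]
  ring

lemma one_sub_mul_one_sub_cexp {ε : ℂ} (hε : ε ^ 2 = 1) (x y : ℂ) :
    (1 - ε * Complex.exp (-(x - y * Complex.I))) * (1 - ε * Complex.exp (-(x + y * Complex.I))) =
      2 * Complex.exp (-x) * (Complex.cosh x - ε * Complex.cos y) := by
  have hx : Complex.exp (-x) * Complex.exp x = 1 := by rw [← Complex.exp_add]; simp
  have hy : Complex.exp (y * Complex.I) * Complex.exp (-(y * Complex.I)) = 1 := by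
    rw [← Complex.exp_add]; simp
  rw [show -(x - y * Complex.I) = -x + y * Complex.I by ring, neg_add, Complex.exp_add,
    Complex.exp_add, Complex.cosh, Complex.cos, neg_mul y]
  linear_combination -hx + Complex.exp (-x) ^ 2 *
    (Complex.exp (y * Complex.I) * Complex.exp (-(y * Complex.I)) * hε + hy)

lemma hasSum_cexp_neg_conePoint {ε x : ℝ} (hε : |ε| = 1) (hx : 0 < x) (y : ℝ) :
    HasSum (fun p => 2 * (ε : ℂ) ^ (p.1 + p.2) * Complex.exp (-conePoint x y p))
      (1 / (Complex.cosh x - ε * Complex.cos y)) := by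
  have hε' : (ε : ℂ) ^ 2 = 1 := by exact_mod_cast (sq_abs ε).symm.trans (by rw [hε, one_pow])
  have hnorm (w : ℂ) (hw : w.re = x) : ‖(ε : ℂ) * Complex.exp (-w)‖ < 1 := by
    rw [norm_mul, Complex.norm_real, Real.norm_eq_abs, hε]
    simpa [Complex.norm_exp, hw] using hx
  have h₁ := hnorm (x - y * Complex.I) (by simp)
  have h₂ := hnorm (x + y * Complex.I) (by simp)
  have h := ((hasSum_geometric_of_norm_lt_one h₁).mul (hasSum_geometric_of_norm_lt_one h₂)
    (summable_mul_of_summable_norm (summable_norm_geometric_of_norm_lt_one h₁)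
      (summable_norm_geometric_of_norm_lt_one h₂))).mul_left (2 * Complex.exp (-x))
  convert! h using 1
  · ext p
    have hexp : Complex.exp (-conePoint x y p) = Complex.exp (-x) *
        (Complex.exp (-(x - y * Complex.I)) ^ p.1 * Complex.exp (-(x + y * Complex.I)) ^ p.2) := by
      simp only [← Complex.exp_nat_mul, ← Complex.exp_add, conePoint]
      ring_nf
    rw [hexp, mul_pow, mul_pow]
    ring
  · rw [← mul_inv, one_sub_mul_one_sub_cexp hε']
    field_simp

lemma summable_one_div_add_add_one_pow {k : ℕ} (hk : 3 ≤ k) :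
    Summable fun p : ℕ × ℕ => 1 / ((p.1 : ℝ) + p.2 + 1) ^ k := by
  have hinj : Function.Injective fun p : ℕ × ℕ => (![(p.1 : ℤ), p.2 + 1] : Fin 2 → ℤ) := by
    intro p q h
    exact Prod.ext (by simpa using congrFun h 0) (by simpa using congrFun h 1)
  have h := (EisensteinSeries.summable_one_div_norm_rpow (k := k)
    (by exact_mod_cast hk)).comp_injective hinj
  refine h.of_nonneg_of_le (fun p => by positivity) fun p => ?_
  have hle : ‖(![(p.1 : ℤ), p.2 + 1] : Fin 2 → ℤ)‖ ≤ (p.1 : ℝ) + p.2 + 1 := by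
    rw [EisensteinSeries.norm_eq_max_natAbs]
    norm_cast
    simp only [Matrix.cons_val_zero, Matrix.cons_val_one]
    omega
  have hpos : 0 < ‖(![(p.1 : ℤ), p.2 + 1] : Fin 2 → ℤ)‖ :=
    norm_pos_iff.2 fun h0 => by
      have h1 : (p.2 : ℤ) + 1 = 0 := congrFun h0 1
      omega
  rw [Function.comp_apply, Real.rpow_neg hpos.le, Real.rpow_natCast, ← one_div]
  gcongr

lemma hasSum_trigMoment {ε x : ℝ} (hε : |ε| = 1) (hx : 0 < x) (y : ℝ) {j : ℕ} (hj : 2 ≤ j) :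
    HasSum (fun p => 2 * (ε : ℂ) ^ (p.1 + p.2) * (j.factorial / conePoint x y p ^ (j + 1)))
      (trigMoment ε x y j) := by
  have hcoeff (p : ℕ × ℕ) : ‖2 * (ε : ℂ) ^ (p.1 + p.2)‖ = 2 := by
    simp [hε]
  have hsum : Summable fun p => ‖2 * (ε : ℂ) ^ (p.1 + p.2)‖ / (conePoint x y p).re ^ (j + 1) := by
    refine ((summable_one_div_add_add_one_pow (Nat.succ_le_succ hj)).mul_left
      (2 / x ^ (j + 1))).congr fun p => ?_
    rw [hcoeff, conePoint_re, mul_pow]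
    field_simp
  have h := hasSum_integral_pow_mul_of_hasSum_cexp j
    (fun p => by rw [conePoint_re]; positivity) hsum fun s hs => by
      simpa only [conePoint_mul, neg_mul] using
        hasSum_cexp_neg_conePoint hε (mul_pos hx hs) (y * s)
  convert! h using 1
  rw [trigMoment, ← integral_complex_ofReal]
  push_cast
  simp only [mul_one_div]

/-! ### Unfolding the cones to a half plane -/

/-- The points `(2P + 1) b + 2 r i a` of a rectangular lattice in the right half plane, indexed by
`(P, r)`. -/
noncomputable def latticePoint (a b : ℝ) (p : ℕ × ℤ) : ℂ :=
  (2 * p.1 + 1) * b + 2 * p.2 * a * Complex.I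

/-- The map `(P, r) ↦ (|P - r + ½| - ½, |P + r + ½| - ½)`. With `ω = b + ia` the lattice point of
`(P, r)` is `(P - r + ½) ω̄ + (P + r + ½) ω`; folding takes absolute values of both coefficients. -/
def foldIndex (p : ℕ × ℤ) : ℕ × ℕ :=
  ((max (p.1 - p.2) (p.2 - p.1 - 1)).toNat, (max (p.1 + p.2) (-p.1 - p.2 - 1)).toNat)

lemma foldIndex_bijective : Function.Bijective foldIndex := by
  constructor
  · rintro ⟨P, r⟩ ⟨P', r'⟩ h
    simp only [foldIndex, Prod.mk.injEq] at h ⊢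
    omega
  · rintro ⟨m, n⟩
    rcases Nat.even_or_odd' (m + n) with ⟨P, hP | hP⟩
    · refine ⟨(P, n - P), ?_⟩
      simp only [foldIndex, Prod.mk.injEq]
      omega
    · rcases le_or_gt n P with hn | hn
      · refine ⟨(P - n, -(P + 1)), ?_⟩
        simp only [foldIndex, Prod.mk.injEq]
        omega
      · refine ⟨(n - P - 1, P + 1), ?_⟩
        simp only [foldIndex, Prod.mk.injEq]
        omega

lemma conePoint_foldIndex_of_natAbs_le (a b : ℝ) {P : ℕ} {r : ℤ} (h : r.natAbs ≤ P) :
    Even ((foldIndex (P, r)).1 + (foldIndex (P, r)).2) ∧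
      conePoint b a (foldIndex (P, r)) = latticePoint a b (P, r) := by
  have h₁ : ((foldIndex (P, r)).1 : ℤ) = P - r := by simp only [foldIndex]; omega
  have h₂ : ((foldIndex (P, r)).2 : ℤ) = P + r := by simp only [foldIndex]; omega
  refine ⟨⟨P, by omega⟩, ?_⟩
  have c₁ : ((foldIndex (P, r)).1 : ℂ) = P - r := by exact_mod_cast congrArg (Int.cast (R := ℂ)) h₁
  have c₂ : ((foldIndex (P, r)).2 : ℂ) = P + r := by exact_mod_cast congrArg (Int.cast (R := ℂ)) h₂
  simp only [conePoint, latticePoint, c₁, c₂]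
  ring

/-- A lattice point outside the cone of `b - ia` and `b + ia` is, up to sign, a quarter turn of a
point of the cone of `a + ib` and `a - ib`. -/
lemma conePoint_foldIndex_of_lt_natAbs (a b : ℝ) {P : ℕ} {r : ℤ} (h : P < r.natAbs) :
    Odd ((foldIndex (P, r)).1 + (foldIndex (P, r)).2) ∧
      conePoint a (-b) (foldIndex (P, r)) ^ 2 = -latticePoint a b (P, r) ^ 2 := by
  obtain ⟨h₁, h₂⟩ | ⟨h₁, h₂⟩ :
      ((foldIndex (P, r)).1 : ℤ) = r - P - 1 ∧ ((foldIndex (P, r)).2 : ℤ) = P + r ∨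
      ((foldIndex (P, r)).1 : ℤ) = P - r ∧ ((foldIndex (P, r)).2 : ℤ) = -P - r - 1 := by
    simp only [foldIndex]
    omega
  all_goals
    refine ⟨by rw [Nat.odd_iff]; omega, ?_⟩
    have c₁ := congrArg (Int.cast (R := ℂ)) h₁
    have c₂ := congrArg (Int.cast (R := ℂ)) h₂
    push_cast at c₁ c₂
    simp only [conePoint, latticePoint, c₁, c₂]
    push_cast
    linear_combination (4 * r ^ 2 * a ^ 2 + (2 * P + 1) ^ 2 * b ^ 2 : ℂ) * Complex.I_sq

lemma fold_conePoint_pow (k : ℕ) (a b : ℝ) (p : ℕ × ℤ) :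
    (1 + (-1) ^ ((foldIndex p).1 + (foldIndex p).2)) / conePoint b a (foldIndex p) ^ (2 * k) +
      (-1) ^ k * ((1 - (-1) ^ ((foldIndex p).1 + (foldIndex p).2)) /
        conePoint a (-b) (foldIndex p) ^ (2 * k)) = 2 / latticePoint a b p ^ (2 * k) := by
  obtain ⟨P, r⟩ := p
  rcases le_or_gt r.natAbs P with h | h
  · obtain ⟨heven, hpoint⟩ := conePoint_foldIndex_of_natAbs_le a b h
    rw [heven.neg_one_pow, hpoint]
    norm_num
  · obtain ⟨hodd, hpoint⟩ := conePoint_foldIndex_of_lt_natAbs a b h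
    rw [hodd.neg_one_pow, pow_mul (conePoint a _ _), hpoint,
      neg_pow (latticePoint a b _ ^ 2), ← pow_mul,
      ← mul_div_assoc, mul_div_mul_left _ _ (pow_ne_zero k (by norm_num))]
    norm_num

lemma hasSum_latticePoint (n : ℕ) {a b : ℝ} (ha : 0 < a) (hb : 0 < b) :
    HasSum (fun p => 4 * ((2 * n + 3).factorial / latticePoint a b p ^ (2 * n + 4)))
      (trigMoment (-1) b a (2 * n + 3) + trigMoment 1 b a (2 * n + 3) +
        (-1) ^ n * (trigMoment 1 a b (2 * n + 3) - trigMoment (-1) a b (2 * n + 3)) : ℝ) := by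
  have hj : 2 ≤ 2 * n + 3 := by omega
  have hinner := (hasSum_trigMoment (ε := -1) (by simp) hb a hj).add
    (hasSum_trigMoment (ε := 1) (by simp) hb a hj)
  have houter := (hasSum_trigMoment (ε := 1) (by simp) ha (-b) hj).sub
    (hasSum_trigMoment (ε := -1) (by simp) ha (-b) hj)
  have h := (Equiv.ofBijective _ foldIndex_bijective).hasSum_iff.2
    (hinner.add (houter.mul_left ((-1) ^ n)))
  simp only [trigMoment_neg] at h
  convert! h using 1
  · ext p
    have hp := fold_conePoint_pow (n + 2) a b p
    rw [show 2 * (n + 2) = 2 * n + 4 by ring] at hp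
    simp only [Function.comp_apply, Equiv.ofBijective_apply, Complex.ofReal_neg,
      Complex.ofReal_one, one_pow]
    linear_combination (-2 * ((2 * n + 3).factorial : ℂ)) * hp
  · push_cast
    rfl

/-! ### Evaluation of the lattice sum -/

/-- The **Lipschitz formula**. -/
lemma tsum_int_factorial_div_add_pow {j : ℕ} (hj : 1 ≤ j) {w : ℂ} (hw : 0 < w.re) :
    ∑' r : ℤ, (j.factorial : ℂ) / (w + 2 * π * Complex.I * r) ^ (j + 1) =
      ∑' m : ℕ, ((m : ℂ) + 1) ^ j * Complex.exp (-w) ^ (m + 1) := by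
  have hπ : (-2 * π * Complex.I : ℂ) ≠ 0 := by simp [Real.pi_ne_zero]
  let z : UpperHalfPlane := ⟨w * Complex.I / (2 * π), by
    rw [show w * Complex.I / (2 * π) = w * Complex.I / (2 * π : ℝ) by push_cast; rfl,
      Complex.div_ofReal_im, Complex.mul_I_im]
    positivity⟩
  have hz : (z : ℂ) = w * Complex.I / (2 * π) := rfl
  have hq : Complex.exp (2 * π * Complex.I * z) = Complex.exp (-w) := by
    rw [hz]
    congr 1
    field_simp
    rw [Complex.I_sq, neg_one_mul]
  have hpoint (r : ℤ) : w + 2 * π * Complex.I * (-r : ℤ) = -2 * π * Complex.I * (z + r) := by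
    rw [hz]
    push_cast
    field_simp
    linear_combination w * Complex.I_sq
  have hsum : Summable fun m : ℕ => (m : ℂ) ^ j * Complex.exp (-w) ^ m :=
    summable_pow_mul_geometric_of_norm_lt_one j (by simpa [Complex.norm_exp] using hw)
  have h := EisensteinSeries.qExpansion_identity hj z
  rw [hq, hsum.tsum_eq_zero_add] at h
  simp only [Nat.cast_zero, zero_pow (Nat.one_le_iff_ne_zero.1 hj), zero_mul, zero_add,
    Nat.cast_succ] at h
  have hterm (r : ℤ) : (j.factorial : ℂ) / (w + 2 * π * Complex.I * (-r : ℤ)) ^ (j + 1) =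
      j.factorial / (-2 * π * Complex.I) ^ (j + 1) * (1 / ((z : ℂ) + r) ^ (j + 1)) := by
    rw [hpoint, mul_pow, div_mul_div_comm, mul_one]
  rw [← (Equiv.neg ℤ).tsum_eq]
  simp only [Equiv.neg_apply, hterm]
  rw [tsum_mul_left, h, ← mul_assoc, div_mul_div_cancel₀ (pow_ne_zero _ hπ),
    div_self (Nat.cast_ne_zero.2 j.factorial_ne_zero), one_mul]

lemma summable_pow_mul_geometric_odd (j : ℕ) {q : ℝ} (hq₀ : 0 ≤ q) (hq₁ : q < 1) :
    Summable fun p : ℕ × ℕ => ((p.2 : ℝ) + 1) ^ j * (q ^ (2 * p.1 + 1)) ^ (p.2 + 1) := by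
  have hpow : Summable fun m : ℕ => ((m : ℝ) + 1) ^ j * q ^ (m + 1) := by
    have h := summable_pow_mul_geometric_of_norm_lt_one j
      (show ‖q‖ < 1 by rwa [Real.norm_of_nonneg hq₀])
    exact_mod_cast (summable_nat_add_iff 1).2 h
  refine ((summable_geometric_of_lt_one hq₀ hq₁).mul_of_nonneg hpow
    (fun _ => by positivity) fun _ => by positivity).of_nonneg_of_le
    (fun _ => by positivity) fun p => ?_
  rw [mul_left_comm, ← pow_add, ← pow_mul]
  gcongr ?_ * ?_
  exact pow_le_pow_of_le_one hq₀ hq₁.le (by nlinarith [Nat.zero_le (p.1 * p.2)])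

lemma tsum_tsum_pow_mul_geometric_odd (j : ℕ) {q : ℝ} (hq₀ : 0 ≤ q) (hq₁ : q < 1) :
    ∑' (P : ℕ) (m : ℕ), ((m : ℝ) + 1) ^ j * (q ^ (2 * P + 1)) ^ (m + 1) =
      ∑' m : ℕ, ((m : ℝ) + 1) ^ j * q ^ (m + 1) / (1 - q ^ (2 * (m + 1))) := by
  have hcomm := (summable_pow_mul_geometric_odd j hq₀ hq₁).tsum_comm
    (f := fun P m : ℕ => ((m : ℝ) + 1) ^ j * (q ^ (2 * P + 1)) ^ (m + 1))
  rw [← hcomm]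
  refine tsum_congr fun m => ?_
  have hterm (P : ℕ) : ((m : ℝ) + 1) ^ j * (q ^ (2 * P + 1)) ^ (m + 1) =
      ((m : ℝ) + 1) ^ j * q ^ (m + 1) * (q ^ (2 * (m + 1))) ^ P := by
    simp only [← pow_mul, mul_assoc, ← pow_add]
    congr 2
    ring
  simp only [hterm]
  rw [tsum_mul_left, tsum_geometric_of_lt_one (by positivity) (pow_lt_one₀ hq₀ hq₁ (by omega)),
    div_eq_mul_inv]

lemma tsum_latticePoint {j : ℕ} (hj : 1 ≤ j) {a b : ℝ} (ha : 0 < a) (hb : 0 < b)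
    (hsum : Summable fun p => (j.factorial : ℂ) / latticePoint a b p ^ (j + 1)) :
    ∑' p, (j.factorial : ℂ) / latticePoint a b p ^ (j + 1) =
      ((π / a) ^ (j + 1) * ∑' m : ℕ, ((m : ℝ) + 1) ^ j *
        Real.exp (-(π * b / a)) ^ (m + 1) / (1 - Real.exp (-(π * b / a)) ^ (2 * (m + 1))) : ℝ) := by
  have hfiber (P : ℕ) : ∑' r : ℤ, (j.factorial : ℂ) / latticePoint a b (P, r) ^ (j + 1) =
      ((π / a) ^ (j + 1) * ∑' m : ℕ, ((m : ℝ) + 1) ^ j *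
        (Real.exp (-(π * b / a)) ^ (2 * P + 1)) ^ (m + 1) : ℝ) := by
    have hpoint (r : ℤ) : latticePoint a b (P, r) =
        a / π * (((2 * P + 1 : ℕ) * (π * b / a) : ℝ) + 2 * π * Complex.I * r) := by
      simp only [latticePoint]
      have ha' : (a : ℂ) ≠ 0 := Complex.ofReal_ne_zero.2 ha.ne'
      push_cast
      field_simp
    have hterm (r : ℤ) : (j.factorial : ℂ) / latticePoint a b (P, r) ^ (j + 1) =
        (π / a) ^ (j + 1) * (j.factorial /
          (((2 * P + 1 : ℕ) * (π * b / a) : ℝ) + 2 * π * Complex.I * r) ^ (j + 1)) := by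
      rw [hpoint, mul_pow, ← div_div, div_eq_mul_inv _ ((a / π : ℂ) ^ _), ← inv_pow, inv_div]
      ring
    simp only [hterm]
    rw [tsum_mul_left, tsum_int_factorial_div_add_pow hj (by rw [Complex.ofReal_re]; positivity),
      ← Real.exp_nat_mul, mul_neg]
    push_cast
    rfl
  have hq : Real.exp (-(π * b / a)) < 1 := by
    rw [Real.exp_lt_one_iff, neg_lt_zero]
    positivity
  rw [hsum.tsum_prod]
  simp only [hfiber]
  rw [← Complex.ofReal_tsum, tsum_mul_left,
    tsum_tsum_pow_mul_geometric_odd j (Real.exp_pos _).le hq]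

/-! ### The moment integrals -/

/-- `Iplus` with an arbitrary pair `(a, b)` in place of `(K, K')`. -/
noncomputable def momentPlus (a b : ℝ) (n : ℕ) : ℝ :=
  (1 / 2) * (∫ x in Set.Ioi (0 : ℝ), x ^ n /
      (Real.cos (a * Real.sqrt x) + Real.cosh (b * Real.sqrt x)))
  + ((-1 : ℝ) ^ n / 2) * (∫ x in Set.Ioi (0 : ℝ), x ^ n /
      (Real.cosh (a * Real.sqrt x) + Real.cos (b * Real.sqrt x)))

/-- `Iminus` with an arbitrary pair `(a, b)` in place of `(K, K')`. -/
noncomputable def momentMinus (a b : ℝ) (n : ℕ) : ℝ :=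
  (∫ x in Set.Ioi (0 : ℝ), x ^ (n + 1) /
      (Real.cos (a * Real.sqrt x) - Real.cosh (b * Real.sqrt x)))
  + (-1 : ℝ) ^ (n + 1) * (∫ x in Set.Ioi (0 : ℝ), x ^ (n + 1) /
      (Real.cosh (a * Real.sqrt x) - Real.cos (b * Real.sqrt x)))

lemma integral_pow_div_comp_sqrt (n : ℕ) (g : ℝ → ℝ) :
    ∫ x in Set.Ioi (0 : ℝ), x ^ n / g (Real.sqrt x) =
      2 * ∫ s in Set.Ioi (0 : ℝ), s ^ (2 * n + 1) / g s := by
  rw [← integral_comp_rpow_Ioi_of_pos two_pos, ← integral_const_mul]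
  refine setIntegral_congr_fun measurableSet_Ioi fun s hs => ?_
  have hexp : (2 : ℝ) - 1 = 1 := by norm_num
  simp only [hexp, Real.rpow_one, Real.rpow_two, Real.sqrt_sq (Set.mem_Ioi.1 hs).le, smul_eq_mul]
  ring

lemma momentPlus_eq_trigMoment (a b : ℝ) (n : ℕ) :
    momentPlus a b n =
      trigMoment (-1) b a (2 * n + 1) + (-1) ^ n * trigMoment (-1) a b (2 * n + 1) := by
  rw [momentPlus, integral_pow_div_comp_sqrt n fun s => Real.cos (a * s) + Real.cosh (b * s),
    integral_pow_div_comp_sqrt n fun s => Real.cosh (a * s) + Real.cos (b * s)]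
  simp only [trigMoment, neg_one_mul, sub_neg_eq_add, add_comm (Real.cos (a * _))]
  ring

lemma momentMinus_eq_trigMoment (a b : ℝ) (n : ℕ) :
    momentMinus a b n =
      -2 * (trigMoment 1 b a (2 * n + 3) + (-1) ^ n * trigMoment 1 a b (2 * n + 3)) := by
  rw [momentMinus, integral_pow_div_comp_sqrt _ fun s => Real.cos (a * s) - Real.cosh (b * s),
    integral_pow_div_comp_sqrt _ fun s => Real.cosh (a * s) - Real.cos (b * s)]
  have hba : ∫ s in Set.Ioi (0 : ℝ), s ^ (2 * n + 3) / (Real.cos (a * s) - Real.cosh (b * s)) =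
      -trigMoment 1 b a (2 * n + 3) := by
    simp only [trigMoment, one_mul, ← integral_neg, ← div_neg, neg_sub]
  have hab : ∫ s in Set.Ioi (0 : ℝ), s ^ (2 * n + 3) / (Real.cosh (a * s) - Real.cos (b * s)) =
      trigMoment 1 a b (2 * n + 3) := by
    simp only [trigMoment, one_mul]
  rw [show 2 * (n + 1) + 1 = 2 * n + 3 by ring, hba, hab]
  ring

theorem two_Iplus_sub_Iminus_general {a b : ℝ} (ha : 0 < a) (hb : 0 < b) (n : ℕ) :
    2 * momentPlus a b (n + 1) - momentMinus a b n =
      8 * (π / a) ^ (2 * n + 4) * ∑' m : ℕ, ((m : ℝ) + 1) ^ (2 * n + 3) *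
        Real.exp (-(π * b / a)) ^ (m + 1) / (1 - Real.exp (-(π * b / a)) ^ (2 * (m + 1))) := by
  have hlattice := hasSum_latticePoint n ha hb
  have hsum := (summable_mul_left_iff (by norm_num : (4 : ℂ) ≠ 0)).1 hlattice.summable
  have h := hlattice.tsum_eq
  rw [tsum_mul_left, tsum_latticePoint (by omega) ha hb hsum, ← Complex.ofReal_ofNat 4,
    ← Complex.ofReal_mul, Complex.ofReal_inj] at h
  rw [momentPlus_eq_trigMoment, momentMinus_eq_trigMoment, show 2 * (n + 1) + 1 = 2 * n + 3 by ring]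
  linear_combination -2 * h

lemma ellipticK_pos {k : ℝ} (hk : k ^ 2 < 1) : 0 < ellipticK k := by
  have hpos (θ : ℝ) : 0 < 1 - k ^ 2 * Real.sin θ ^ 2 := by
    nlinarith [Real.sin_sq_le_one θ, sq_nonneg k]
  exact intervalIntegral.intervalIntegral_pos_of_pos
    (Continuous.intervalIntegrable
      (Continuous.rpow_const (by fun_prop) fun θ => Or.inl (hpos θ).ne') _ _)
    (fun θ => Real.rpow_pos_of_pos (hpos θ) _) (by positivity)

theorem two_Iplus_sub_Iminus (k : ℝ) (hk : k ∈ Set.Ioo (0 : ℝ) 1) (n : ℕ) :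
    2 * Iplus k (n + 1) - Iminus k n =
      8 * (π / ellipticK k) ^ (2 * n + 4) *
        ∑' m : ℕ, ((m : ℝ) + 1) ^ (2 * n + 3) *
          Real.exp (-(π * ellipticK (Real.sqrt (1 - k ^ 2)) / ellipticK k)) ^ (m + 1) /
            (1 - Real.exp (-(π * ellipticK (Real.sqrt (1 - k ^ 2)) / ellipticK k)) ^ (2 * (m + 1))) := by
  have hk₁ : k ^ 2 < 1 := (sq_lt_one_iff₀ hk.1.le).2 hk.2
  have hk₂ : √(1 - k ^ 2) ^ 2 < 1 := by
    rw [Real.sq_sqrt (sub_nonneg.2 hk₁.le)]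
    exact sub_lt_self 1 (pow_pos hk.1 2)
  exact two_Iplus_sub_Iminus_general (ellipticK_pos hk₁) (ellipticK_pos hk₂) n
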